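/- Equip P = k[x₁,x₂,x₃] with the Poisson bracket {x₁,x₂} = 0, {x₂,x₃} = 2x₁x₂, {x₃,x₁} = x₁². If G is a nontrivial finite subgroup of the graded Poisson automorphism group of P generated by Poisson reflections, then the invariant subalgebra P^G is not isomorphic to P as a Poisson algebra. -/

import Mathlib

open MvPolynomial

/-- The bracket on `k[x₁,x₂,x₃]` determined by the values `p12 = {x₁,x₂}`, `p23 = {x₂,x₃}`,
`p31 = {x₃,x₁}` via `{f,g} = Σ_{i<j} (∂f/∂xᵢ·∂g/∂xⱼ − ∂f/∂xⱼ·∂g/∂xᵢ)·{xᵢ,xⱼ}`. -/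
noncomputable def jacBracket {k : Type*} [Field k] (p12 p23 p31 : MvPolynomial (Fin 3) k)
    (f g : MvPolynomial (Fin 3) k) : MvPolynomial (Fin 3) k :=
  (pderiv 0 f * pderiv 1 g - pderiv 1 f * pderiv 0 g) * p12 +
    (pderiv 1 f * pderiv 2 g - pderiv 2 f * pderiv 1 g) * p23 +
    (pderiv 2 f * pderiv 0 g - pderiv 0 f * pderiv 2 g) * p31

/-- A graded Poisson automorphism: an algebra automorphism preserving the degree-one
component and the Poisson bracket. -/
def IsGradedPoissonAut {k : Type*} [Field k]
    (br : MvPolynomial (Fin 3) k → MvPolynomial (Fin 3) k → MvPolynomial (Fin 3) k)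
    (φ : MvPolynomial (Fin 3) k ≃ₐ[k] MvPolynomial (Fin 3) k) : Prop :=
  (∀ i, (φ (X i)).IsHomogeneous 1) ∧ ∀ f g, φ (br f g) = br (φ f) (φ g)

/-- A Poisson reflection: a graded Poisson automorphism of finite order whose restriction to
the degree-one part (as a matrix) has eigenvalues `1, 1, ξ` for some root of unity `ξ ≠ 1`. -/
def IsPoissonReflection {k : Type*} [Field k]
    (br : MvPolynomial (Fin 3) k → MvPolynomial (Fin 3) k → MvPolynomial (Fin 3) k)
    (φ : MvPolynomial (Fin 3) k ≃ₐ[k] MvPolynomial (Fin 3) k) : Prop :=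
  IsGradedPoissonAut br φ ∧ (∃ n, 0 < n ∧ φ ^ n = 1) ∧
    ∃ M : Matrix (Fin 3) (Fin 3) k, (∀ i, φ (X i) = ∑ j, C (M i j) * X j) ∧
      ∃ ξ : k, ξ ≠ 1 ∧ (∃ m, 0 < m ∧ ξ ^ m = 1) ∧
        M.charpoly = (Polynomial.X - 1) ^ 2 * (Polynomial.X - Polynomial.C ξ)

/-- `P^G ≅ P` as Poisson algebras: there is an injective algebra map `e : P → P` preserving
the bracket whose range is the invariant subalgebra `P^G`. -/
def InvariantsPoissonIso {k : Type*} [Field k]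
    (br : MvPolynomial (Fin 3) k → MvPolynomial (Fin 3) k → MvPolynomial (Fin 3) k)
    (G : Subgroup (MvPolynomial (Fin 3) k ≃ₐ[k] MvPolynomial (Fin 3) k)) : Prop :=
  ∃ e : MvPolynomial (Fin 3) k →ₐ[k] MvPolynomial (Fin 3) k,
    Function.Injective e ∧
    Set.range e = {f : MvPolynomial (Fin 3) k | ∀ φ ∈ G, φ f = f} ∧
    ∀ f g, e (br f g) = br (e f) (e g)

/-!
The bracket is the Jacobian bracket `{f, g} = det ∂(f, g, Ω)/∂(x₁, x₂, x₃)` with potential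
`Ω = x₁² x₂`. If an endomorphism `e` preserves such a bracket and has Jacobian determinant `J`,
Cramer's rule gives `d(e Ω) = J dΩ`, hence `dJ ∧ dΩ = 0`.

Comparing coefficients in the bracket relations, Poisson reflections fix `x₁`, scale `x₂`, and send
`x₃` to `x₃` plus a combination of `x₁` and `x₂`. So `x₁`, the orbit product of `x₂` and the orbit
sum of `x₃` are invariants with Jacobian a nonzero multiple of a power of `x₂`. If `P^G` is the
image of `e`, then `J` divides this Jacobian, and `dJ ∧ dΩ = 0` forces `J` to be a nonzero constant.
But a reflection `φ ∈ G` satisfies `φ ∘ e = e`, so the chain rule gives `φ(J) · det φ = J`, that is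
`det φ = 1`, whereas `det φ = ξ ≠ 1`.
-/

section Jacobian

variable {R σ τ υ : Type*} [CommRing R]

theorem pderiv_algHom [Fintype σ] (e : MvPolynomial σ R →ₐ[R] MvPolynomial τ R) (i : τ)
    (p : MvPolynomial σ R) :
    pderiv i (e p) = ∑ j, e (pderiv j p) * pderiv i (e (X j)) := by
  classical
  induction p using MvPolynomial.induction_on with
  | C a => simp [← MvPolynomial.algebraMap_eq]
  | add p q hp hq => simp only [map_add, hp, hq, add_mul, Finset.sum_add_distrib]
  | mul_X p j hp =>
    simp only [map_mul, pderiv_mul, hp, map_add, add_mul, Finset.sum_add_distrib, Finset.sum_mul]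
    simp [pderiv_X, Pi.single_apply, mul_right_comm]

theorem pderiv_comm (i j : τ) (p : MvPolynomial τ R) :
    pderiv i (pderiv j p) = pderiv j (pderiv i p) := by
  classical
  have h : ⁅pderiv (R := R) i, pderiv j⁆ = 0 := derivation_ext fun l => by
    rw [Derivation.commutator_apply]
    simp [pderiv_X, Pi.single_apply, apply_ite]
  rw [← sub_eq_zero, ← Derivation.commutator_apply, h, Derivation.zero_apply]

theorem pderiv_mul_pderiv_comm_of_pderiv_eq_mul {U J Ω : MvPolynomial τ R}
    (h : ∀ i, pderiv i U = J * pderiv i Ω) (i j : τ) :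
    pderiv i J * pderiv j Ω = pderiv j J * pderiv i Ω := by
  have hij := pderiv_comm i j U
  rw [h, h, pderiv_mul, pderiv_mul, pderiv_comm i j Ω] at hij
  exact add_right_cancel hij

/-- The Jacobian matrix `(∂e(xᵢ)/∂xⱼ)` of the polynomial map with coordinates `e(xᵢ)`. -/
noncomputable def jacobianMatrix (e : MvPolynomial σ R →ₐ[R] MvPolynomial τ R) :
    Matrix σ τ (MvPolynomial τ R) :=
  Matrix.of fun i j => pderiv j (e (X i))

theorem jacobianMatrix_comp [Fintype τ] (e : MvPolynomial τ R →ₐ[R] MvPolynomial υ R)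
    (f : MvPolynomial σ R →ₐ[R] MvPolynomial τ R) :
    jacobianMatrix (e.comp f) = (jacobianMatrix f).map e * jacobianMatrix e := by
  ext1 i j
  simp only [jacobianMatrix, Matrix.mul_apply, Matrix.of_apply, Matrix.map_apply,
    AlgHom.comp_apply]
  exact pderiv_algHom e j _

variable [Fintype σ] [DecidableEq σ]

/-- The Jacobian determinant of the polynomial self-map of affine space with coordinates
`e(xᵢ)`. -/
noncomputable def jacobianDet (e : MvPolynomial σ R →ₐ[R] MvPolynomial σ R) :
    MvPolynomial σ R :=
  (jacobianMatrix e).det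

theorem jacobianDet_comp (e f : MvPolynomial σ R →ₐ[R] MvPolynomial σ R) :
    jacobianDet (e.comp f) = e (jacobianDet f) * jacobianDet e := by
  rw [jacobianDet, jacobianMatrix_comp, Matrix.det_mul, jacobianDet, jacobianDet, AlgHom.map_det]
  rfl

theorem jacobianDet_dvd_of_mem_range {e f : MvPolynomial σ R →ₐ[R] MvPolynomial σ R}
    (h : ∀ i, f (X i) ∈ Set.range e) : jacobianDet e ∣ jacobianDet f := by
  choose g hg using h
  have hfactor : f = e.comp (aeval g) := algHom_ext fun i => by simp [hg]
  rw [hfactor, jacobianDet_comp]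
  exact dvd_mul_left _ _

theorem jacobianDet_of_linear {e : MvPolynomial σ R →ₐ[R] MvPolynomial σ R} {M : Matrix σ σ R}
    (h : ∀ i, e (X i) = ∑ j, C (M i j) * X j) : jacobianDet e = C M.det := by
  have hM : jacobianMatrix e = C.mapMatrix M := by
    ext1 i j
    simp [jacobianMatrix, h, pderiv_X, Pi.single_apply]
  rw [jacobianDet, hM, RingHom.map_det]

theorem jacobianDet_eq_one_of_comp_eq {e φ : MvPolynomial σ R →ₐ[R] MvPolynomial σ R} {u : R}
    (hu : IsUnit u) (he : jacobianDet e = C u) (hφ : φ.comp e = e) : jacobianDet φ = 1 := by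
  have h := jacobianDet_comp φ e
  rw [hφ, he, ← algebraMap_eq, AlgHom.commutes] at h
  exact (hu.map (algebraMap R (MvPolynomial σ R))).mul_left_cancel (by rw [← h, mul_one])

end Jacobian

theorem jacobianDet_aeval_triangular {R : Type*} [CommRing R] (b c s t : R) (n : ℕ) :
    jacobianDet (aeval ![X 0, C b * X 1 ^ n, C s * X 0 + C t * X 1 + C c * X 2]) =
      C (b * n * c) * (X 1 : MvPolynomial (Fin 3) R) ^ (n - 1) := by
  rw [jacobianDet, Matrix.det_fin_three]
  simp [jacobianMatrix]
  ring

section Divisors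

variable {R σ : Type*} [CommRing R] [IsDomain R] {p : MvPolynomial σ R} {i j : σ} {n : ℕ}

theorem exists_eq_C_mul_X_pow_of_dvd_X_pow (h : p ∣ X i ^ n) :
    ∃ u m, IsUnit u ∧ p = C u * X i ^ m := by
  obtain ⟨m, -, v, hv⟩ := (dvd_prime_pow (X_prime (R := R) (i := i)) n).1 h
  obtain ⟨u, hu, huv⟩ := isUnit_iff_eq_C_of_isReduced.1 v⁻¹.isUnit
  exact ⟨u, m, hu, by rw [← huv, ← hv, mul_comm, mul_assoc, Units.mul_inv, mul_one]⟩

theorem pderiv_eq_zero_of_dvd_X_pow (h : p ∣ X i ^ n) (hij : i ≠ j) : pderiv j p = 0 := by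
  obtain ⟨u, m, -, rfl⟩ := exists_eq_C_mul_X_pow_of_dvd_X_pow h
  simp [pderiv_X_of_ne hij]

theorem exists_eq_C_of_dvd_X_pow_of_pderiv_eq_zero [CharZero R] (h : p ∣ X i ^ n)
    (hp : pderiv i p = 0) : ∃ u, IsUnit u ∧ p = C u := by
  obtain ⟨u, m, hu, rfl⟩ := exists_eq_C_mul_X_pow_of_dvd_X_pow h
  have hm : m = 0 := by simpa [pderiv_pow, hu.ne_zero, X_ne_zero] using hp
  exact ⟨u, hu, by simp [hm]⟩

end Divisors

theorem eq_of_sq_X_sub_C_mul_eq {R : Type*} [CommRing R] [IsDomain R] {a b c d : R}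
    (h : (Polynomial.X - Polynomial.C a) ^ 2 * (Polynomial.X - Polynomial.C b) =
      (Polynomial.X - Polynomial.C c) ^ 2 * (Polynomial.X - Polynomial.C d)) : a = c := by
  have heval : (a - c) ^ 2 * (a - d) = 0 := by
    simpa using (congrArg (Polynomial.eval a) h).symm
  refine (mul_eq_zero.1 heval).elim (fun hac => sub_eq_zero.1 (sq_eq_zero_iff.1 hac)) fun had => ?_
  obtain rfl := sub_eq_zero.1 had
  have hcancel : (Polynomial.X - Polynomial.C a) * (Polynomial.X - Polynomial.C b) =
      (Polynomial.X - Polynomial.C c) ^ 2 :=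
    mul_right_cancel₀ (Polynomial.X_sub_C_ne_zero a) (by linear_combination h)
  have heval' : (a - c) ^ 2 = 0 := by simpa using (congrArg (Polynomial.eval a) hcancel).symm
  exact sub_eq_zero.1 (sq_eq_zero_iff.1 heval')

theorem smul_sum_perm {G M : Type*} [Group G] [Fintype G] [AddCommMonoid M] [DistribMulAction G M]
    (x : M) (g : G) : g • ∑ h : G, h • x = ∑ h : G, h • x := by
  simp only [Finset.smul_sum, smul_smul]
  exact Equiv.sum_comp (Equiv.mulLeft g) (· • x)

theorem exists_matrix_of_isHomogeneous_one {R σ τ : Type*} [CommSemiring R] [Fintype τ]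
    {f : σ → MvPolynomial τ R} (hf : ∀ i, (f i).IsHomogeneous 1) :
    ∃ M : Matrix σ τ R, ∀ i, f i = ∑ j, C (M i j) * X j := by
  refine ⟨Matrix.of fun i j => coeff 0 (pderiv j (f i)), fun i => ?_⟩
  have hconst (j : τ) : C (coeff 0 (pderiv j (f i))) = pderiv j (f i) :=
    (totalDegree_eq_zero_iff_eq_C.1 <|
      (totalDegree_zero_iff_isHomogeneous _).2 (hf i).pderiv).symm
  simpa [hconst, mul_comm] using (hf i).sum_X_mul_pderiv.symm

section Potential

variable {k : Type*} [Field k]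

/-- The Jacobian bracket `{f, g} = det ∂(f, g, Ω)/∂(x₁, x₂, x₃)` with potential `Ω`. -/
noncomputable def potentialBracket (Ω f g : MvPolynomial (Fin 3) k) : MvPolynomial (Fin 3) k :=
  jacBracket (pderiv 2 Ω) (pderiv 0 Ω) (pderiv 1 Ω) f g

theorem potentialBracket_X_sq_mul_X (f g : MvPolynomial (Fin 3) k) :
    potentialBracket (X 0 ^ 2 * X 1) f g = jacBracket 0 (2 * X 0 * X 1) (X 0 ^ 2) f g := by
  have h0 : pderiv 0 (X 0 ^ 2 * X 1 : MvPolynomial (Fin 3) k) = 2 * X 0 * X 1 := by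
    simp [mul_comm, mul_left_comm]
  have h1 : pderiv 1 (X 0 ^ 2 * X 1 : MvPolynomial (Fin 3) k) = X 0 ^ 2 := by
    simp
  have h2 : pderiv 2 (X 0 ^ 2 * X 1 : MvPolynomial (Fin 3) k) = 0 := by
    simp
  rw [potentialBracket, h0, h1, h2]

theorem pderiv_algHom_potential {Ω : MvPolynomial (Fin 3) k}
    {e : MvPolynomial (Fin 3) k →ₐ[k] MvPolynomial (Fin 3) k}
    (he : ∀ f g, e (potentialBracket Ω f g) = potentialBracket Ω (e f) (e g)) (i : Fin 3) :
    pderiv i (e Ω) = jacobianDet e * pderiv i Ω := by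
  -- For the Jacobian matrix `A` of `e` these say `cof(A) ∇Ω = e(∇Ω)`;
  -- multiplying by `Aᵀ` gives `det(A) ∇Ω = ∇(e Ω)`.
  have h01 : e (pderiv 2 Ω) = potentialBracket Ω (e (X 0)) (e (X 1)) := by
    rw [← he]; simp [potentialBracket, jacBracket]
  have h12 : e (pderiv 0 Ω) = potentialBracket Ω (e (X 1)) (e (X 2)) := by
    rw [← he]; simp [potentialBracket, jacBracket]
  have h20 : e (pderiv 1 Ω) = potentialBracket Ω (e (X 2)) (e (X 0)) := by
    rw [← he]; simp [potentialBracket, jacBracket]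
  rw [pderiv_algHom, Fin.sum_univ_three, h01, h12, h20, jacobianDet, Matrix.det_fin_three]
  fin_cases i <;> simp [jacobianMatrix, potentialBracket, jacBracket] <;> ring

end Potential

section CubicPotential

variable {k : Type*} [Field k]

theorem exists_matrix_eq_of_map_jacBracket [CharZero k]
    {φ : MvPolynomial (Fin 3) k ≃ₐ[k] MvPolynomial (Fin 3) k} {M : Matrix (Fin 3) (Fin 3) k}
    (hφ : ∀ f g, φ (jacBracket 0 (2 * X 0 * X 1) (X 0 ^ 2) f g) =
      jacBracket 0 (2 * X 0 * X 1) (X 0 ^ 2) (φ f) (φ g))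
    (hM : ∀ i, φ (X i) = ∑ j, C (M i j) * X j) :
    ∃ a b s t, M = !![a, 0, 0; 0, b, 0; s, t, a] := by
  have eval_bracket_20 (x y z : k) : (M 0 0 * x + M 0 1 * y + M 0 2 * z) ^ 2 =
      (M 2 1 * M 0 2 - M 2 2 * M 0 1) * (2 * x * y) +
        (M 2 2 * M 0 0 - M 2 0 * M 0 2) * x ^ 2 := by
    simpa [hM, jacBracket, Fin.sum_univ_three] using congrArg (eval ![x, y, z]) (hφ (X 2) (X 0))
  have eval_bracket_12 (x y z : k) :
      2 * (M 0 0 * x + M 0 1 * y + M 0 2 * z) * (M 1 0 * x + M 1 1 * y + M 1 2 * z) =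
        (M 1 1 * M 2 2 - M 1 2 * M 2 1) * (2 * x * y) +
          (M 1 2 * M 2 0 - M 1 0 * M 2 2) * x ^ 2 := by
    simpa [hM, jacBracket, Fin.sum_univ_three, map_ofNat] using
      congrArg (eval ![x, y, z]) (hφ (X 1) (X 2))
  have h01 : M 0 1 = 0 := by simpa using eval_bracket_20 0 1 0
  have h02 : M 0 2 = 0 := by simpa using eval_bracket_20 0 0 1
  have h00 : M 0 0 ≠ 0 := fun h00 => by
    have hX : φ (X 0) = 0 := by simp [hM, Fin.sum_univ_three, h00, h01, h02]
    exact X_ne_zero 0 ((map_eq_zero_iff φ φ.injective).1 hX)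
  simp only [h01, h02, zero_mul, mul_zero, add_zero, sub_zero] at eval_bracket_20 eval_bracket_12
  have h22 : M 2 2 = M 0 0 := by
    apply mul_right_cancel₀ h00
    linear_combination -eval_bracket_20 1 0 0
  have h12 : M 1 2 = 0 := by
    apply mul_left_cancel₀ (mul_ne_zero two_ne_zero h00)
    linear_combination eval_bracket_12 1 0 1 - eval_bracket_12 1 0 0
  have h10 : M 1 0 = 0 := by
    apply mul_left_cancel₀ (mul_ne_zero three_ne_zero h00)
    linear_combination eval_bracket_12 1 0 0 + M 2 0 * h12 - M 1 0 * h22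
  refine ⟨M 0 0, M 1 1, M 2 0, M 2 1, ?_⟩
  conv_lhs => rw [Matrix.eta_fin_three M, h01, h02, h10, h12, h22]

theorem exists_map_X_eq_of_isGradedPoissonAut [CharZero k]
    {φ : MvPolynomial (Fin 3) k ≃ₐ[k] MvPolynomial (Fin 3) k}
    (hφ : IsGradedPoissonAut (jacBracket 0 (2 * X 0 * X 1) (X 0 ^ 2)) φ) (h0 : φ (X 0) = X 0) :
    ∃ b s t, φ (X 1) = C b * X 1 ∧ φ (X 2) = C s * X 0 + C t * X 1 + X 2 := by
  obtain ⟨M, hM⟩ := exists_matrix_of_isHomogeneous_one hφ.1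
  obtain ⟨a, b, s, t, rfl⟩ := exists_matrix_eq_of_map_jacBracket hφ.2 hM
  have hX0 : φ (X 0) = C a * X 0 := by simp [hM, Fin.sum_univ_three]
  have hX1 : φ (X 1) = C b * X 1 := by simp [hM, Fin.sum_univ_three]
  have hX2 : φ (X 2) = C s * X 0 + C t * X 1 + C a * X 2 := by simp [hM, Fin.sum_univ_three]
  have ha : (C a : MvPolynomial (Fin 3) k) = 1 :=
    mul_right_cancel₀ (X_ne_zero 0) (by rw [← hX0, h0, one_mul])
  exact ⟨b, s, t, hX1, by rw [hX2, ha, one_mul]⟩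

theorem IsPoissonReflection.map_X_zero [CharZero k]
    {φ : MvPolynomial (Fin 3) k ≃ₐ[k] MvPolynomial (Fin 3) k}
    (hφ : IsPoissonReflection (jacBracket 0 (2 * X 0 * X 1) (X 0 ^ 2)) φ) : φ (X 0) = X 0 := by
  obtain ⟨⟨-, hbr⟩, -, M, hM, ξ, -, -, hcharpoly⟩ := hφ
  obtain ⟨a, b, s, t, rfl⟩ := exists_matrix_eq_of_map_jacBracket hbr hM
  have ha : a = 1 := by
    refine eq_of_sq_X_sub_C_mul_eq (b := b) (d := ξ) ?_
    rw [Polynomial.C_1, ← hcharpoly]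
    simp [Matrix.charpoly, Matrix.det_fin_three, sq, mul_right_comm]
  simp [hM, Fin.sum_univ_three, ha]

theorem IsPoissonReflection.jacobianDet_ne_one
    {br : MvPolynomial (Fin 3) k → MvPolynomial (Fin 3) k → MvPolynomial (Fin 3) k}
    {φ : MvPolynomial (Fin 3) k ≃ₐ[k] MvPolynomial (Fin 3) k} (hφ : IsPoissonReflection br φ) :
    jacobianDet (φ : MvPolynomial (Fin 3) k →ₐ[k] MvPolynomial (Fin 3) k) ≠ 1 := by
  obtain ⟨-, -, M, hM, ξ, hξ, -, hcharpoly⟩ := hφ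
  have hdet : M.det = ξ := by
    simp [Matrix.det_eq_sign_charpoly_coeff, hcharpoly, Polynomial.coeff_zero_eq_eval_zero,
      Odd.neg_one_pow (by decide : Odd 3)]
  rw [jacobianDet_of_linear hM, hdet, ← C_1, (C_injective _ _).ne_iff]
  exact hξ

theorem exists_jacobianDet_eq_C_of_dvd_X_pow [CharZero k]
    {e : MvPolynomial (Fin 3) k →ₐ[k] MvPolynomial (Fin 3) k} {n : ℕ}
    (he : ∀ f g, e (jacBracket 0 (2 * X 0 * X 1) (X 0 ^ 2) f g) =
      jacBracket 0 (2 * X 0 * X 1) (X 0 ^ 2) (e f) (e g))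
    (hdvd : jacobianDet e ∣ X 1 ^ n) : ∃ u, IsUnit u ∧ jacobianDet e = C u := by
  simp only [← potentialBracket_X_sq_mul_X] at he
  have hdep := pderiv_mul_pderiv_comm_of_pderiv_eq_mul (pderiv_algHom_potential he) 0 1
  rw [pderiv_eq_zero_of_dvd_X_pow hdvd one_ne_zero] at hdep
  refine exists_eq_C_of_dvd_X_pow_of_pderiv_eq_zero hdvd ?_
  simpa [X_ne_zero] using hdep.symm

theorem exists_invariant_algHom_jacobianDet_dvd_X_pow [CharZero k]
    {G : Subgroup (MvPolynomial (Fin 3) k ≃ₐ[k] MvPolynomial (Fin 3) k)} [Finite G]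
    (hG : ∀ g ∈ G, g (X 0) = X 0 ∧
      ∃ b s t, g (X 1) = C b * X 1 ∧ g (X 2) = C s * X 0 + C t * X 1 + X 2) :
    ∃ (θ : MvPolynomial (Fin 3) k →ₐ[k] MvPolynomial (Fin 3) k) (n : ℕ),
      (∀ i, ∀ g ∈ G, g (θ (X i)) = θ (X i)) ∧ jacobianDet θ ∣ X 1 ^ n := by
  have := Fintype.ofFinite G
  choose hX0 b s t hX1 hX2 using fun g : G => hG g g.2
  set N := Fintype.card G
  have hN : (N : k) ≠ 0 := Nat.cast_ne_zero.2 Fintype.card_ne_zero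
  have hb : ∏ g, b g ≠ 0 := Finset.prod_ne_zero_iff.2 fun g _ hbg => by
    simpa [hbg, X_ne_zero] using hX1 g
  have hprod : ∏ g : G, g • (X 1 : MvPolynomial (Fin 3) k) = C (∏ g, b g) * X 1 ^ N := by
    simp [Subgroup.smul_def, hX1, Finset.prod_mul_distrib, N]
  have hsum : ∑ g : G, g • (X 2 : MvPolynomial (Fin 3) k) =
      C (∑ g, s g) * X 0 + C (∑ g, t g) * X 1 + C (N : k) * X 2 := by
    simp [Subgroup.smul_def, hX2, Finset.sum_add_distrib, Finset.sum_mul, N]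
  refine ⟨aeval ![X 0, ∏ g : G, g • X 1, ∑ g : G, g • X 2], N - 1, fun i g hg => ?_, ?_⟩
  · fin_cases i
    · simpa using hX0 ⟨g, hg⟩
    · simpa using Finset.smul_prod_perm (X 1 : MvPolynomial (Fin 3) k) (⟨g, hg⟩ : G)
    · simpa using smul_sum_perm (X 2 : MvPolynomial (Fin 3) k) (⟨g, hg⟩ : G)
  · rw [hprod, hsum, jacobianDet_aeval_triangular]
    exact ((mul_ne_zero (mul_ne_zero hb hN) hN).isUnit.map C).mul_left_dvd.2 dvd_rfl

end CubicPotential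

theorem stmt_12_general {k : Type*} [Field k] [CharZero k]
    (G : Subgroup (MvPolynomial (Fin 3) k ≃ₐ[k] MvPolynomial (Fin 3) k))
    (hG : ∀ φ ∈ G, IsGradedPoissonAut (jacBracket 0 (2 * X 0 * X 1) (X 0 ^ 2)) φ)
    (hfin : Finite G) (hnt : G ≠ ⊥)
    (hgen : ∃ S : Set (MvPolynomial (Fin 3) k ≃ₐ[k] MvPolynomial (Fin 3) k),
      (∀ φ ∈ S, IsPoissonReflection (jacBracket 0 (2 * X 0 * X 1) (X 0 ^ 2)) φ) ∧
        Subgroup.closure S = G) :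
    ¬ InvariantsPoissonIso (jacBracket 0 (2 * X 0 * X 1) (X 0 ^ 2)) G := by
  rintro ⟨e, -, hrange, he⟩
  obtain ⟨S, hS, rfl⟩ := hgen
  obtain ⟨φ, hφ⟩ : S.Nonempty :=
    Set.nonempty_iff_ne_empty.2 fun hempty => hnt (by rw [hempty, Subgroup.closure_empty])
  have hX0 : Subgroup.closure S ≤ MulAction.stabilizer _ (X 0 : MvPolynomial (Fin 3) k) :=
    (Subgroup.closure_le _).2 fun ψ hψ => (hS ψ hψ).map_X_zero
  obtain ⟨θ, n, hθ, hθdvd⟩ := exists_invariant_algHom_jacobianDet_dvd_X_pow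
    fun g hg => ⟨hX0 hg, exists_map_X_eq_of_isGradedPoissonAut (hG g hg) (hX0 hg)⟩
  have hedvd : jacobianDet e ∣ X 1 ^ n :=
    (jacobianDet_dvd_of_mem_range fun i => hrange.superset (hθ i)).trans hθdvd
  obtain ⟨u, hu, hJ⟩ := exists_jacobianDet_eq_C_of_dvd_X_pow he hedvd
  have hφe : (φ : MvPolynomial (Fin 3) k →ₐ[k] MvPolynomial (Fin 3) k).comp e = e :=
    AlgHom.ext fun f => hrange.subset ⟨f, rfl⟩ φ (Subgroup.subset_closure hφ)
  exact (hS φ hφ).jacobianDet_ne_one (jacobianDet_eq_one_of_comp_eq hu hJ hφe)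

/-- With this bracket, if `G` is a nontrivial finite subgroup of graded Poisson
automorphisms generated by Poisson reflections, then `P^G` is not isomorphic to `P`
as a Poisson algebra. -/
theorem stmt_12 {k : Type*} [Field k] [IsAlgClosed k] [CharZero k]
    (G : Subgroup (MvPolynomial (Fin 3) k ≃ₐ[k] MvPolynomial (Fin 3) k))
    (hG : ∀ φ ∈ G, IsGradedPoissonAut (jacBracket 0 (2 * X 0 * X 1) (X 0 ^ 2)) φ)
    (hfin : Finite G) (hnt : G ≠ ⊥)
    (hgen : ∃ S : Set (MvPolynomial (Fin 3) k ≃ₐ[k] MvPolynomial (Fin 3) k),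
      (∀ φ ∈ S, IsPoissonReflection (jacBracket 0 (2 * X 0 * X 1) (X 0 ^ 2)) φ) ∧ Subgroup.closure S = G) :
    ¬ InvariantsPoissonIso (jacBracket 0 (2 * X 0 * X 1) (X 0 ^ 2)) G := by
  exact stmt_12_general G hG hfin hnt hgen
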